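/- Let Λ′ ∈ P^+_{l′}, Λ″ ∈ P^+_{l″}, p ∈ 𝒫(Λ′,Λ″), λ = λ(p) ∈ 𝒴(Λ′,Λ″), and ♯λ := λ(♯p) ∈ 𝒴(♯Λ″,♯Λ′). Then for every k > 0 and every r ∈ ℤ/nℤ, the number of length-k rows of ♯λ whose right end has colour r equals the number of length-k rows of λ whose left end has colour −r. Moreover ♯λ is the unique element of 𝒴(♯Λ″,♯Λ′) with this property. -/

import Mathlib

/-!
For a multipartition with column heights `h_j(m)`, put `S_j(m) = v_j - h_j(m)`. The length-`k` rows
of component `j` correspond to the integers `x` with `S_j(k) < x ≤ S_j(k+1)`, and such a row has left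
end of colour `x` and right end of colour `x + k - 1` modulo `n`.

* *Differences.* If `c(r)` counts the length-`k` rows with left end of colour `r`, then
  `c(r) - c(r+1)` telescopes to `#{j : S_j(k+1) ≡ r} - #{j : S_j(k) ≡ r}`, a quantity read off from
  the path (`leftCount_sub`).
* *Aperiodicity.* For a highest-lift, some colour `r` has `c(r) = 0` (`IsHL.exists_leftCount_eq_zero`).
  Indeed, being cylindrical means that each `S(m)` extends to a weakly increasing sequence with
  `S_{j+l} = S_j + n`. If every colour occurs, then `S_{j+1}(k) ≤ S_j(k+1)` for all `j`, so column
  `k` may be replaced by its rotation `S_{j+1}(k)`. This is again a cylindrical lift of the same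
  path, and it is strictly higher.

So the row counts of a highest-lift are determined by its path: their differences are known and
their minimum is `0`. A computation with `♯p` shows that the right-end counts of `♯λ` and the
reflected left-end counts of `λ` have the same differences up to a constant, which vanishes on
summing over `ZMod n`; both have minimum `0`, so they agree. Conversely the row counts and the
highest weight determine the path, by descending from large `k`, hence the highest-lift. This is
uniqueness.
-/

open scoped BigOperators

namespace BF

/-- The fundamental weight `Λ_i`, viewed as the indicator function `ZMod n → ℤ` of `i`. -/
def Lam (n : ℕ) (i : ZMod n) : ZMod n → ℤ := fun j => if j = i then 1 else 0

/-- A weight is dominant if all its coefficients are nonnegative. -/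
def Dominant (n : ℕ) (a : ZMod n → ℤ) : Prop := ∀ i, 0 ≤ a i

/-- The step weight of `e : ZMod n → ℕ`: its `Λ_j`-coefficient is `e (j-1) - e j`. -/
def stepWt (n : ℕ) (e : ZMod n → ℕ) : ZMod n → ℤ := fun j => (e (j - 1) : ℤ) - (e j : ℤ)

/-- Membership in `A_l^+`: `d` is the step weight of some `e : ZMod n → ℕ` of total sum `l`. -/
def InA (n : ℕ) [NeZero n] (l : ℕ) (d : ZMod n → ℤ) : Prop :=
  ∃ e : ZMod n → ℕ, (∑ i, e i) = l ∧ d = stepWt n e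

/-- The ground-state path of the weight `Λ`: `p̄_k (i) = Λ (i - k)`,
which is the coefficient form of `p̄_k = Λ_{v₀+k} + ⋯ + Λ_{v_{l-1}+k}`. -/
def gsp (n : ℕ) (Λ : ZMod n → ℤ) (k : ℕ) : ZMod n → ℤ := fun i => Λ (i - (k : ZMod n))

/-- `p` is a `Λ`-path of level `l`. -/
def IsPath (n : ℕ) [NeZero n] (l : ℕ) (Λ : ZMod n → ℤ) (p : ℕ → ZMod n → ℤ) : Prop :=
  (∀ k, InA n l (fun i => p (k + 1) i - p k i)) ∧ ∃ K, ∀ k ≥ K, p k = gsp n Λ k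

/-- The length of a `Λ`-path: least `K` with `p k = p̄ k` for all `k ≥ K`. -/
noncomputable def pathLen (n : ℕ) (Λ : ZMod n → ℤ) (p : ℕ → ZMod n → ℤ) : ℕ :=
  sInf {K | ∀ k ≥ K, p k = gsp n Λ k}

/-- `f : ℕ → ℕ` is a partition (rows are indexed from `0`). -/
def IsPartitionF (f : ℕ → ℕ) : Prop := (∀ i, f (i + 1) ≤ f i) ∧ ∃ N, ∀ i ≥ N, f i = 0

/-- An `l`-multipartition. -/
def IsMP (l : ℕ) (lam : Fin l → ℕ → ℕ) : Prop := ∀ j, IsPartitionF (lam j)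

/-- The data `v : Fin l → ℕ` of a decomposition `Λ = Λ_{v 0} + ⋯ + Λ_{v (l-1)}`
with `0 ≤ v 0 ≤ ⋯ ≤ v (l-1) < n`. -/
def SortedV (n l : ℕ) (v : Fin l → ℕ) : Prop := Monotone v ∧ ∀ j, v j < n

/-- The weight `Λ = Λ_{v 0} + ⋯ + Λ_{v (l-1)}` determined by `v`. -/
def wtOf (n : ℕ) {l : ℕ} (v : Fin l → ℕ) : ZMod n → ℤ :=
  fun i => ((Finset.univ.filter fun j : Fin l => ((v j : ZMod n) = i)).card : ℤ)

/-- The colour of the node in (0-based) row `i`, (1-based) column `c` of component `j`: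
`(c - (i+1) + v j) mod n`. -/
def colour (n : ℕ) {l : ℕ} (v : Fin l → ℕ) (j : Fin l) (i c : ℕ) : ZMod n :=
  (c : ZMod n) - (i : ZMod n) - 1 + (v j : ZMod n)

/-- `N^r(λ)`: the total number of nodes of colour `r` in the multipartition `λ`. -/
noncomputable def Ncolour (n : ℕ) {l : ℕ} (v : Fin l → ℕ) (lam : Fin l → ℕ → ℕ)
    (r : ZMod n) : ℕ :=
  Nat.card {x : Fin l × ℕ × ℕ //
    1 ≤ x.2.2 ∧ x.2.2 ≤ lam x.1 x.2.1 ∧ colour n v x.1 x.2.1 x.2.2 = r}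

/-- The height `f′_m` of the `m`-th column of the partition `f`. -/
noncomputable def colHt (f : ℕ → ℕ) (m : ℕ) : ℕ := Nat.card {i : ℕ // m ≤ f i}

/-- The function `e` whose step weight is the `k`-th step of `π(λ)`:
`e i = #{j : v j + k - λ^{(j)′}_{k+1} ≡ i mod n}`. -/
noncomputable def eFun (n : ℕ) {l : ℕ} (v : Fin l → ℕ) (lam : Fin l → ℕ → ℕ) (k : ℕ) :
    ZMod n → ℕ :=
  fun i => Nat.card {j : Fin l //
    (v j : ZMod n) + (k : ZMod n) - (colHt (lam j) (k + 1) : ZMod n) = i}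

/-- `p = π(λ)` where `λ` is an `l`-multipartition of highest weight `wtOf n v`. -/
def IsPi (n : ℕ) {l : ℕ} (v : Fin l → ℕ) (lam : Fin l → ℕ → ℕ)
    (p : ℕ → ZMod n → ℤ) : Prop :=
  (∀ k, (fun i => p (k + 1) i - p k i) = stepWt n (eFun n v lam k)) ∧
  ∃ K, ∀ k ≥ K, p k = gsp n (wtOf n v) k

/-- `λ` is cylindrical of highest weight `Λ = wtOf n v`. -/
def Cylindrical (n : ℕ) {l : ℕ} (v : Fin l → ℕ) (lam : Fin l → ℕ → ℕ) : Prop :=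
  (∀ (j : ℕ) (hj : j + 1 < l) (i : ℕ),
      lam ⟨j + 1, hj⟩ (i + (v ⟨j + 1, hj⟩ - v ⟨j, Nat.lt_of_succ_lt hj⟩)) ≤
        lam ⟨j, Nat.lt_of_succ_lt hj⟩ i) ∧
  ∀ (hl : 0 < l) (i : ℕ),
      lam ⟨0, hl⟩ (i + (n + v ⟨0, hl⟩ - v ⟨l - 1, Nat.sub_lt hl Nat.one_pos⟩)) ≤
        lam ⟨l - 1, Nat.sub_lt hl Nat.one_pos⟩ i

/-- `λ` is higher than `μ`: every column of each component of `λ` is at most as high as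
the corresponding column of `μ`. -/
def Higher {l : ℕ} (lam mu : Fin l → ℕ → ℕ) : Prop :=
  ∀ (j : Fin l) (k : ℕ), 1 ≤ k → colHt (lam j) k ≤ colHt (mu j) k

/-- `λ` is the highest-lift of the path `p`: it is a cylindrical multipartition with
`π(λ) = p` which is higher than every cylindrical multipartition mapping to `p`. -/
def IsHL (n : ℕ) {l : ℕ} (v : Fin l → ℕ) (lam : Fin l → ℕ → ℕ)
    (p : ℕ → ZMod n → ℤ) : Prop :=
  IsMP l lam ∧ Cylindrical n v lam ∧ IsPi n v lam p ∧
    ∀ mu : Fin l → ℕ → ℕ, IsMP l mu → Cylindrical n v mu → IsPi n v mu p → Higher lam mu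

/-- `λ ∈ 𝒴(Λ)` with `Λ = wtOf n v`. -/
def InY (n : ℕ) {l : ℕ} (v : Fin l → ℕ) (lam : Fin l → ℕ → ℕ) : Prop :=
  ∃ p, IsHL n v lam p

/-- `α′_r = -Λ_{r-1} + 2Λ_r - Λ_{r+1}`. -/
def alphaP (n : ℕ) (r : ZMod n) : ZMod n → ℤ :=
  fun i => -(Lam n (r - 1) i) + 2 * Lam n r i - Lam n (r + 1) i

/-- `ψ_r(k)`: the number of length-`k` rows of `λ` whose right end has colour `r`. -/
noncomputable def psiCount (n : ℕ) {l : ℕ} (v : Fin l → ℕ) (lam : Fin l → ℕ → ℕ)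
    (k : ℕ) (r : ZMod n) : ℕ :=
  Nat.card {x : Fin l × ℕ // lam x.1 x.2 = k ∧ colour n v x.1 x.2 k = r}

/-- The number of length-`k` rows of `λ` whose left end has colour `r`. -/
noncomputable def leftCount (n : ℕ) {l : ℕ} (v : Fin l → ℕ) (lam : Fin l → ℕ → ℕ)
    (k : ℕ) (r : ZMod n) : ℕ :=
  Nat.card {x : Fin l × ℕ // lam x.1 x.2 = k ∧ colour n v x.1 x.2 1 = r}

/-- The total number of length-`k` rows of `λ`. -/
noncomputable def rowCount {l : ℕ} (lam : Fin l → ℕ → ℕ) (k : ℕ) : ℕ :=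
  Nat.card {x : Fin l × ℕ // lam x.1 x.2 = k}

/-- `m_r(k)`: the number of `r`-nodes of `λ` in column `k` or to its right. -/
noncomputable def mCount (n : ℕ) {l : ℕ} (v : Fin l → ℕ) (lam : Fin l → ℕ → ℕ)
    (k : ℕ) (r : ZMod n) : ℕ :=
  Nat.card {x : Fin l × ℕ × ℕ //
    k ≤ x.2.2 ∧ x.2.2 ≤ lam x.1 x.2.1 ∧ colour n v x.1 x.2.1 x.2.2 = r}

/-- `p` is a `(Λ′,Λ″)`-restricted path, where `l''` is the level of `Λ″`:
`p - Λ′ ∈ 𝒫(Λ″)` and `p_k - η̂_k` is dominant for all `k`. -/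
def IsRes (n : ℕ) [NeZero n] (l'' : ℕ) (L' L'' : ZMod n → ℤ) (p : ℕ → ZMod n → ℤ) : Prop :=
  IsPath n l'' L'' (fun k i => p k i - L' i) ∧
  ∀ k, ∃ e : ZMod n → ℕ, (∑ i, e i) = l'' ∧
    (fun i => p (k + 1) i - p k i) = stepWt n e ∧ ∀ i, (e i : ℤ) ≤ p k i

/-- The length of a restricted path: `ℓ(p) = ℓ(p - Λ′)`. -/
noncomputable def resLen (n : ℕ) (L' L'' : ZMod n → ℤ) (p : ℕ → ZMod n → ℤ) : ℕ :=
  sInf {K | ∀ k ≥ K, (fun i => p k i - L' i) = gsp n L'' k}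

/-- `♯Λ`. -/
def sharpWt (n : ℕ) (Λ : ZMod n → ℤ) : ZMod n → ℤ := fun i => Λ (-i)

/-- `♯p`: `(♯p)_k (i) = a_{k-i}(k)` where `p_k = ∑ a_i(k) Λ_i`. -/
def sharpPath (n : ℕ) (p : ℕ → ZMod n → ℤ) : ℕ → ZMod n → ℤ :=
  fun k i => p k ((k : ZMod n) - i)

/-- `θ(a) = 1` if `a ≥ 0`, `0` otherwise. -/
def theta (a : ℤ) : ℕ := if 0 ≤ a then 1 else 0

/-- The function counting the entries of `μ : Fin l → ℕ` in each class mod `n`. -/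
def cntF (n : ℕ) {l : ℕ} (μ : Fin l → ℕ) : ZMod n → ℕ :=
  fun i => (Finset.univ.filter fun j : Fin l => ((μ j : ZMod n) = i)).card

/-- The energy function `H` on `A_l^+ × A_l^+`:
`H(α,β) = min_{σ ∈ S_l} ∑_j θ(μ_j - ν_{σ(j)})` where `α`, `β` are the step weights of
`Λ_{μ_0} + ⋯ + Λ_{μ_{l-1}}`, `Λ_{ν_0} + ⋯ + Λ_{ν_{l-1}}` with `0 ≤ μ_j, ν_j < n`. -/
noncomputable def Hfun (n : ℕ) (l : ℕ) (d d' : ZMod n → ℤ) : ℕ :=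
  sInf {m | ∃ μ ν : Fin l → ℕ, (∀ j, μ j < n) ∧ (∀ j, ν j < n) ∧
    d = stepWt n (cntF n μ) ∧ d' = stepWt n (cntF n ν) ∧
    m = Finset.univ.inf' ⟨1, Finset.mem_univ 1⟩
      fun σ : Equiv.Perm (Fin l) => ∑ j, theta ((μ j : ℤ) - (ν (σ j) : ℤ))}

/-- `(j, i)` is a removable `r`-node of `λ` (node at the right end of 0-based row `i`
of component `j`). -/
def RemNode (n : ℕ) {l : ℕ} (v : Fin l → ℕ) (lam : Fin l → ℕ → ℕ) (r : ZMod n)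
    (j : Fin l) (i : ℕ) : Prop :=
  1 ≤ lam j i ∧ lam j (i + 1) < lam j i ∧ colour n v j i (lam j i) = r

/-- `(j, i)` is an addable `r`-node of `λ` (node addable at the end of 0-based row `i`
of component `j`). -/
def AddNode (n : ℕ) {l : ℕ} (v : Fin l → ℕ) (lam : Fin l → ℕ → ℕ) (r : ZMod n)
    (j : Fin l) (i : ℕ) : Prop :=
  (i = 0 ∨ lam j i < lam j (i - 1)) ∧ colour n v j i (lam j i + 1) = r

/-- The diagonal number `d = c - (i+1) + v j` of the addable/removable node
`x = (j, i, isRemovable)`. -/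
def nodeD {l : ℕ} (v : Fin l → ℕ) (lam : Fin l → ℕ → ℕ) (x : Fin l × ℕ × Bool) : ℤ :=
  (if x.2.2 then (lam x.1 x.2.1 : ℤ) else (lam x.1 x.2.1 : ℤ) + 1) - ((x.2.1 : ℤ) + 1) + (v x.1 : ℤ)

/-- The total order on addable/removable nodes: `(d,j) < (d',j')` iff `d < d'`, or
`d = d'` and `j > j'`. -/
def nodeLT {l : ℕ} (v : Fin l → ℕ) (lam : Fin l → ℕ → ℕ) (x y : Fin l × ℕ × Bool) : Prop :=
  nodeD v lam x < nodeD v lam y ∨ (nodeD v lam x = nodeD v lam y ∧ (y.1 : ℕ) < (x.1 : ℕ))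

/-- `L` is the `r`-signature of `λ`: the increasing list of all addable and removable
`r`-nodes (flag `true` = removable, `false` = addable). -/
def IsSig (n : ℕ) {l : ℕ} (v : Fin l → ℕ) (lam : Fin l → ℕ → ℕ) (r : ZMod n)
    (L : List (Fin l × ℕ × Bool)) : Prop :=
  L.Pairwise (nodeLT v lam) ∧
  ∀ x : Fin l × ℕ × Bool, x ∈ L ↔
    ((x.2.2 = true ∧ RemNode n v lam r x.1 x.2.1) ∨
      (x.2.2 = false ∧ AddNode n v lam r x.1 x.2.1))

/-- One step of the reduction procedure on signature words: delete an adjacent pair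
consisting of a removable node (`true`) immediately followed by an addable node (`false`). -/
inductive SigStep : List Bool → List Bool → Prop
  | pair (l₁ l₂ : List Bool) : SigStep (l₁ ++ true :: false :: l₂) (l₁ ++ l₂)


/-! ### Column heights -/

lemma lt_colHt_iff {f : ℕ → ℕ} (hf : IsPartitionF f) {m : ℕ} (hm : 1 ≤ m) (i : ℕ) :
    i < colHt f m ↔ m ≤ f i := by
  have hanti : Antitone f := antitone_nat_of_succ_le hf.1
  obtain ⟨N, hN⟩ := hf.2
  have hex : ∃ i, f i < m := ⟨N, by rw [hN N le_rfl]; omega⟩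
  have key : ∀ i, i < Nat.find hex ↔ m ≤ f i := by
    intro i
    constructor
    · intro h
      exact not_lt.mp (Nat.find_min hex h)
    · intro h
      by_contra hc
      have h1 := Nat.find_spec hex
      have h2 := hanti (not_lt.mp hc)
      omega
  have hcard : colHt f m = Nat.find hex := by
    unfold colHt
    rw [Nat.subtype_card (Finset.range (Nat.find hex)) (by
      intro i; rw [Finset.mem_range, key]), Finset.card_range]
  rw [hcard, key]

lemma colHt_eq_of_iff {f : ℕ → ℕ} (hf : IsPartitionF f) {m h : ℕ} (hm : 1 ≤ m)
    (H : ∀ i, m ≤ f i ↔ i < h) : colHt f m = h := by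
  apply le_antisymm
  · by_contra hc
    have := (H h).1 ((lt_colHt_iff hf hm h).1 (by omega))
    omega
  · by_contra hc
    have := (lt_colHt_iff hf hm (colHt f m)).2 ((H _).2 (by omega))
    omega

lemma colHt_succ_le {f : ℕ → ℕ} (hf : IsPartitionF f) {m : ℕ} (hm : 1 ≤ m) :
    colHt f (m + 1) ≤ colHt f m := by
  by_contra hc
  have h1 := (lt_colHt_iff hf (by omega) (colHt f m)).1 (not_le.mp hc)
  have h2 := (lt_colHt_iff hf hm (colHt f m)).2 (by omega)
  omega

lemma eq_iff_colHt {f : ℕ → ℕ} (hf : IsPartitionF f) {m : ℕ} (hm : 1 ≤ m) (i : ℕ) :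
    f i = m ↔ colHt f (m + 1) ≤ i ∧ i < colHt f m := by
  have h1 := lt_colHt_iff hf hm i
  have h2 := lt_colHt_iff hf (show 1 ≤ m + 1 by omega) i
  omega

lemma eq_of_colHt {f g : ℕ → ℕ} (hf : IsPartitionF f) (hg : IsPartitionF g)
    (h : ∀ m, 1 ≤ m → colHt f m = colHt g m) : f = g := by
  funext i
  apply eq_of_forall_le_iff
  intro m
  rcases Nat.eq_zero_or_pos m with rfl | hm
  · simp
  · rw [← lt_colHt_iff hf hm, ← lt_colHt_iff hg hm, h m hm]

/-- A row inequality between two partitions with a shift, in terms of columns. -/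
lemma shift_le_iff {f g : ℕ → ℕ} (hf : IsPartitionF f) (hg : IsPartitionF g) (d : ℕ) :
    (∀ i, f (i + d) ≤ g i) ↔ ∀ m, 1 ≤ m → colHt f m ≤ colHt g m + d := by
  constructor
  · intro h m hm
    by_contra hc
    have h1 := (lt_colHt_iff hf hm (colHt g m + d)).1 (not_le.mp hc)
    have h2 := (lt_colHt_iff hg hm (colHt g m)).2 (h1.trans (h _))
    omega
  · intro h i
    rcases Nat.eq_zero_or_pos (f (i + d)) with h0 | h0
    · omega
    · have h1 := (lt_colHt_iff hf h0 (i + d)).2 le_rfl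
      have h2 := h _ h0
      exact (lt_colHt_iff hg h0 i).1 (by omega)

lemma colHt_eq_zero_of_large {l : ℕ} {lam : Fin l → ℕ → ℕ} (h : IsMP l lam) :
    ∃ K, ∀ k ≥ K, ∀ j, colHt (lam j) (k + 1) = 0 := by
  refine ⟨∑ j, lam j 0, fun k hk j => ?_⟩
  apply colHt_eq_of_iff (h j) (by omega)
  intro i
  have h1 : lam j i ≤ lam j 0 := antitone_nat_of_succ_le (h j).1 (Nat.zero_le i)
  have h2 : lam j 0 ≤ ∑ j, lam j 0 :=
    Finset.single_le_sum (f := fun j => lam j 0) (fun _ _ => Nat.zero_le _) (Finset.mem_univ j)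
  omega

/-- The position `S_j(m) = v_j - λ^{(j)′}_m` of the `m`-th column of component `j`. -/
noncomputable def colPos {l : ℕ} (v : Fin l → ℕ) (lam : Fin l → ℕ → ℕ) (m : ℕ) (j : Fin l) : ℤ :=
  (v j : ℤ) - colHt (lam j) m

/-- A tuple `b` which extends to a weakly increasing sequence with `b_{j+l} = b_j + n`. -/
def CylTuple (n : ℕ) {l : ℕ} (b : Fin (l + 1) → ℤ) : Prop :=
  Monotone b ∧ b (Fin.last l) ≤ b 0 + n

lemma cylindrical_iff {n l : ℕ} {v : Fin (l + 1) → ℕ} (hv : SortedV n (l + 1) v)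
    {lam : Fin (l + 1) → ℕ → ℕ} (h : IsMP (l + 1) lam) :
    Cylindrical n v lam ↔ ∀ m, 1 ≤ m → CylTuple n (colPos v lam m) := by
  have hlast : (⟨l + 1 - 1, Nat.sub_lt (Nat.succ_pos l) Nat.one_pos⟩ : Fin (l + 1)) = Fin.last l := by
    ext; simp
  have h0 : (⟨0, Nat.succ_pos l⟩ : Fin (l + 1)) = 0 := rfl
  have hvl := hv.2 (Fin.last l)
  unfold Cylindrical CylTuple
  constructor
  · rintro ⟨h1, h2⟩ m hm
    constructor
    · rw [Fin.monotone_iff_le_succ]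
      intro j
      have := (shift_le_iff (h _) (h _) _).1 (h1 j.1 (by omega)) m hm
      have hvj : v j.castSucc ≤ v j.succ := hv.1 (Fin.castSucc_le_succ j)
      change colHt (lam j.succ) m ≤ colHt (lam j.castSucc) m + (v j.succ - v j.castSucc) at this
      unfold colPos
      omega
    · have := (shift_le_iff (h _) (h _) _).1 (h2 (Nat.succ_pos l)) m hm
      rw [hlast, h0] at this
      unfold colPos
      omega
  · intro H
    constructor
    · intro j hj
      rw [shift_le_iff (h _) (h _)]
      intro m hm
      have hle : (⟨j, Nat.lt_of_succ_lt hj⟩ : Fin (l + 1)) ≤ ⟨j + 1, hj⟩ := by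
        rw [Fin.le_def]; exact Nat.le_succ j
      have h1 := (H m hm).1 hle
      have h2 := hv.1 hle
      unfold colPos at h1
      omega
    · intro hl
      rw [shift_le_iff (h _) (h _), hlast, h0]
      intro m hm
      have := (H m hm).2
      unfold colPos at this
      omega

/-! ### Row counts and steps of the path -/

lemma psiCount_eq {n l : ℕ} (v : Fin l → ℕ) (lam : Fin l → ℕ → ℕ) (k : ℕ) (r : ZMod n) :
    psiCount n v lam k r = leftCount n v lam k (r - k + 1) := by
  unfold psiCount leftCount colour
  apply Nat.card_congr
  apply Equiv.subtypeEquivRight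
  intro x
  apply and_congr_right
  intro _
  push_cast
  constructor <;> intro h
  · rw [← h]; ring
  · linear_combination h

lemma eFun_eq {n l : ℕ} (v : Fin l → ℕ) (lam : Fin l → ℕ → ℕ) (k : ℕ) (i : ZMod n) :
    (eFun n v lam k i : ℤ) =
      ∑ j, if (v j : ZMod n) - (colHt (lam j) (k + 1) : ZMod n) = i - k then 1 else 0 := by
  unfold eFun
  rw [Nat.subtype_card (Finset.univ.filter fun j : Fin l =>
    (v j : ZMod n) - (colHt (lam j) (k + 1) : ZMod n) = i - k), Finset.card_filter]
  · push_cast; rfl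
  · intro j
    simp only [Finset.mem_filter, Finset.mem_univ, true_and]
    constructor <;> intro h <;> linear_combination h

lemma leftCount_eq {n l : ℕ} (v : Fin l → ℕ) {lam : Fin l → ℕ → ℕ} (h : IsMP l lam) {k : ℕ}
    (hk : 1 ≤ k) (r : ZMod n) :
    (leftCount n v lam k r : ℤ) = ∑ j, ∑ i ∈ Finset.Ico (colHt (lam j) (k + 1)) (colHt (lam j) k),
      if (v j : ZMod n) - (i : ZMod n) = r then 1 else 0 := by
  unfold leftCount colour
  rw [Nat.subtype_card ((Finset.univ.sigma fun j : Fin l =>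
    (Finset.Ico (colHt (lam j) (k + 1)) (colHt (lam j) k)).filter
      fun i : ℕ => (v j : ZMod n) - (i : ZMod n) = r).map
        (Equiv.sigmaEquivProd (Fin l) ℕ).toEmbedding)]
  · rw [Finset.card_map, Finset.card_sigma]
    push_cast
    apply Finset.sum_congr rfl
    intro j _
    rw [Finset.card_filter]
    push_cast
    rfl
  · rintro ⟨j, i⟩
    rw [Finset.mem_map_equiv]
    simp only [Equiv.sigmaEquivProd_symm_apply, Finset.mem_sigma, Finset.mem_univ, true_and,
      Finset.mem_filter, Finset.mem_Ico, eq_iff_colHt (h j) hk]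
    apply and_congr_right
    intro _
    push_cast
    constructor <;> intro h <;> linear_combination h

/-- The variation of the row counts with the colour is determined by the path. -/
lemma leftCount_sub {n l : ℕ} (v : Fin l → ℕ) {lam : Fin l → ℕ → ℕ} (h : IsMP l lam) (k : ℕ)
    (r : ZMod n) :
    (leftCount n v lam (k + 1) r : ℤ) - leftCount n v lam (k + 1) (r + 1) =
      eFun n v lam (k + 1) (r + k + 1) - eFun n v lam k (r + k) := by
  rw [leftCount_eq v h (by omega), leftCount_eq v h (by omega), eFun_eq, eFun_eq,
    ← Finset.sum_sub_distrib, ← Finset.sum_sub_distrib]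
  apply Finset.sum_congr rfl
  intro j _
  rw [← Finset.sum_sub_distrib]
  have hle := colHt_succ_le (h j) (show 1 ≤ k + 1 by omega)
  have e1 : r + (k : ZMod n) + 1 - ((k + 1 : ℕ) : ZMod n) = r := by push_cast; ring
  have e2 : r + (k : ZMod n) - (k : ZMod n) = r := by ring
  rw [e1, e2]
  -- the count for `r + 1` at row `i` is the count for `r` at row `i + 1`
  have key := Finset.sum_Ico_sub
    (fun i : ℕ => if (v j : ZMod n) - (i : ZMod n) = r then (1 : ℤ) else 0) hle
  rw [← neg_sub, ← key, ← Finset.sum_neg_distrib]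
  apply Finset.sum_congr rfl
  intro i _
  have : (v j : ZMod n) - ((i + 1 : ℕ) : ZMod n) = r ↔ (v j : ZMod n) - (i : ZMod n) = r + 1 := by
    push_cast
    constructor <;> intro h <;> linear_combination h
  simp only [this]
  ring

/-! ### Rotating a column of a cylindrical multipartition -/

/-- The rotation `j ↦ b_{j+1}` of a cylindrical tuple, with `b_l = b_0 + n`. -/
def rot (n : ℕ) {l : ℕ} (b : Fin (l + 1) → ℤ) (j : Fin (l + 1)) : ℤ :=
  if j = Fin.last l then b 0 + n else b (j + 1)

lemma rot_last (n : ℕ) {l : ℕ} (b : Fin (l + 1) → ℤ) : rot n b (Fin.last l) = b 0 + n := by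
  simp [rot]

lemma rot_castSucc (n : ℕ) {l : ℕ} (b : Fin (l + 1) → ℤ) (j : Fin l) :
    rot n b j.castSucc = b j.succ := by
  simp [rot, (Fin.castSucc_lt_last j).ne, Fin.coeSucc_eq_succ]

lemma rot_cast (n : ℕ) {l : ℕ} (b : Fin (l + 1) → ℤ) (j : Fin (l + 1)) :
    (rot n b j : ZMod n) = (b (j + 1) : ZMod n) := by
  unfold rot
  split_ifs with h
  · subst h; simp
  · rfl

lemma CylTuple.le_rot {n l : ℕ} {b : Fin (l + 1) → ℤ} (hb : CylTuple n b) (j : Fin (l + 1)) :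
    b j ≤ rot n b j := by
  induction j using Fin.lastCases with
  | last => rw [rot_last]; exact hb.2
  | cast j => rw [rot_castSucc]; exact hb.1 (Fin.castSucc_le_succ j)

lemma CylTuple.rot {n l : ℕ} {b : Fin (l + 1) → ℤ} (hb : CylTuple n b) :
    CylTuple n (rot n b) := by
  constructor
  · rw [Fin.monotone_iff_le_succ]
    intro j
    rw [rot_castSucc]
    exact hb.le_rot _
  · rw [rot_last]
    have := hb.le_rot 0
    omega

lemma not_rot_le {n l : ℕ} (hn : 0 < n) {b : Fin (l + 1) → ℤ} (h : ∀ j, rot n b j ≤ b j) :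
    False := by
  have hle : ∀ j, b j ≤ b 0 := by
    intro j
    induction j using Fin.induction with
    | zero => exact le_rfl
    | succ j ih => exact ((rot_castSucc n b j) ▸ h j.castSucc).trans ih
  have h1 := h (Fin.last l)
  have h2 := hle (Fin.last l)
  rw [rot_last] at h1
  omega

/-- If the intervals `(b_i, a_i]` between two cylindrical tuples meet every residue class, then
the rotation of `b` still lies below `a`: an integer `x = b_{j+1} > a_j` would be congruent to
no element of these intervals. -/
lemma rot_le_of_cover {n l : ℕ} {a b : Fin (l + 1) → ℤ} (ha : CylTuple n a)
    (hb : CylTuple n b) (hc : ∀ x : ℤ, ∃ i q, b i < x + n * q ∧ x + n * q ≤ a i)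
    (j : Fin (l + 1)) : rot n b j ≤ a j := by
  by_contra hlt
  push Not at hlt
  obtain ⟨i, q, h1, h2⟩ := hc (rot n b j)
  have hb0 := hb.1 (Fin.zero_le i)
  have hal := ha.1 (Fin.le_last i)
  have hneg : q ≤ -1 → (n : ℤ) * q ≤ -n := fun hq => by nlinarith
  have hpos : 1 ≤ q → (n : ℤ) ≤ n * q := fun hq => by nlinarith
  induction j using Fin.lastCases with
  | last =>
    rw [rot_last] at *
    rcases lt_or_ge q 0 with hq | hq
    · have := hneg (by omega); omega
    · have : 0 ≤ (n : ℤ) * q := by positivity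
      omega
  | cast j =>
    rw [rot_castSucc] at *
    have hbl := hb.1 (Fin.le_last j.succ)
    have ha0 := ha.1 (Fin.zero_le j.castSucc)
    have hb2 := hb.2
    have ha2 := ha.2
    rcases lt_trichotomy q 0 with hq | hq | hq
    · have := hneg (by omega); omega
    · subst hq
      simp only [mul_zero, add_zero] at h1 h2
      rcases le_or_gt i j.castSucc with hij | hij
      · have := ha.1 hij; omega
      · have := hb.1 (Fin.castSucc_lt_iff_succ_le.1 hij); omega
    · have := hpos (by omega); omega

/-- The partition obtained from `f` by lowering the height of column `k` to `H`. -/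
def lowerCol (f : ℕ → ℕ) (k H : ℕ) (i : ℕ) : ℕ := if f i = k ∧ H ≤ i then k - 1 else f i

lemma lowerCol_isPartition {f : ℕ → ℕ} (hf : IsPartitionF f) {k : ℕ} (hk : 1 ≤ k) (H : ℕ) :
    IsPartitionF (lowerCol f k H) := by
  obtain ⟨h1, N, hN⟩ := hf
  refine ⟨fun i => ?_, N, fun i hi => ?_⟩
  · have := h1 i
    unfold lowerCol
    split_ifs <;> omega
  · have := hN i hi
    unfold lowerCol
    split_ifs <;> omega

lemma colHt_lowerCol_self {f : ℕ → ℕ} (hf : IsPartitionF f) {k : ℕ} (hk : 1 ≤ k) {H : ℕ}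
    (h1 : colHt f (k + 1) ≤ H) (h2 : H ≤ colHt f k) : colHt (lowerCol f k H) k = H := by
  apply colHt_eq_of_iff (lowerCol_isPartition hf hk H) hk
  intro i
  have h3 := lt_colHt_iff hf hk i
  have h4 := lt_colHt_iff hf (show 1 ≤ k + 1 by omega) i
  unfold lowerCol
  split_ifs <;> omega

lemma colHt_lowerCol_ne {f : ℕ → ℕ} (hf : IsPartitionF f) {k : ℕ} (hk : 1 ≤ k) (H : ℕ) {m : ℕ}
    (hm : 1 ≤ m) (hmk : m ≠ k) : colHt (lowerCol f k H) m = colHt f m := by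
  apply colHt_eq_of_iff (lowerCol_isPartition hf hk H) hm
  intro i
  have h3 := lt_colHt_iff hf hm i
  unfold lowerCol
  split_ifs <;> omega

lemma eFun_eq_colPos {n l : ℕ} (v : Fin l → ℕ) (lam : Fin l → ℕ → ℕ) (k : ℕ) (i : ZMod n) :
    (eFun n v lam k i : ℤ) =
      ∑ j, if ((colPos v lam (k + 1) j : ℤ) : ZMod n) = i - k then 1 else 0 := by
  rw [eFun_eq]
  simp [colPos]

lemma eFun_congr {n l : ℕ} (v : Fin l → ℕ) {lam mu : Fin l → ℕ → ℕ} {k : ℕ} (σ : Fin l ≃ Fin l)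
    (h : ∀ j, ((colPos v mu (k + 1) j : ℤ) : ZMod n) = (colPos v lam (k + 1) (σ j) : ℤ)) :
    eFun n v mu k = eFun n v lam k := by
  funext i
  zify
  rw [eFun_eq_colPos, eFun_eq_colPos]
  simp only [h]
  exact Equiv.sum_comp σ fun j => if ((colPos v lam (k + 1) j : ℤ) : ZMod n) = i - k then (1 : ℤ) else 0

/-- Aperiodicity of highest-lifts: in each length `k`, some colour does not occur. -/
lemma IsHL.exists_leftCount_eq_zero {n : ℕ} (hn : 0 < n) {l : ℕ} {v : Fin l → ℕ}
    (hv : SortedV n l v) {lam : Fin l → ℕ → ℕ} {p : ℕ → ZMod n → ℤ} (h : IsHL n v lam p) {k : ℕ}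
    (hk : 1 ≤ k) : ∃ r, leftCount n v lam k r = 0 := by
  obtain ⟨hmp, hcyl, hpi, hmax⟩ := h
  rcases l with _ | l
  · exact ⟨0, by unfold leftCount; simp⟩
  by_contra hne
  push Not at hne
  rw [cylindrical_iff hv hmp] at hcyl
  set a := colPos v lam (k + 1) with ha
  set b := colPos v lam k with hb
  have hrot : ∀ j, rot n b j ≤ a j := by
    apply rot_le_of_cover (hcyl _ (by omega)) (hcyl _ hk)
    intro x
    obtain ⟨⟨⟨i, m⟩, h1, h2⟩⟩ := (Nat.card_ne_zero.1 (hne (x : ZMod n))).1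
    simp only at h1 h2
    rw [eq_iff_colHt (hmp i) hk] at h1
    have h3 : ((((v i : ℤ) - m : ℤ)) : ZMod n) = (x : ℤ) := by
      rw [← h2]; unfold colour; push_cast; ring
    rw [eq_comm, ZMod.intCast_eq_intCast_iff_dvd_sub] at h3
    obtain ⟨q, hq⟩ := h3
    refine ⟨i, q, ?_, ?_⟩
    · simp only [colPos]; omega
    · simp only [colPos]; omega
  -- lower column `k` so that its positions become the rotation of `b`
  let H : Fin (l + 1) → ℕ := fun j => ((v j : ℤ) - rot n b j).toNat
  let mu : Fin (l + 1) → ℕ → ℕ := fun j => lowerCol (lam j) k (H j)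
  have hH : ∀ j, (H j : ℤ) = (v j : ℤ) - rot n b j := by
    intro j
    have := hrot j
    simp only [ha, colPos] at this
    exact Int.toNat_of_nonneg (by omega)
  have hmuk : ∀ j, colHt (mu j) k = H j := by
    intro j
    have h1 := hrot j
    have h2 := (hcyl k hk).le_rot j
    have h3 := hH j
    rw [← hb] at h2
    apply colHt_lowerCol_self (hmp j) hk
    · simp only [ha, colPos] at h1; omega
    · have : b j = (v j : ℤ) - colHt (lam j) k := rfl
      omega
  have hmune : ∀ m, 1 ≤ m → m ≠ k → ∀ j, colHt (mu j) m = colHt (lam j) m :=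
    fun m hm hmk j => colHt_lowerCol_ne (hmp j) hk _ hm hmk
  have hmump : IsMP (l + 1) mu := fun j => lowerCol_isPartition (hmp j) hk _
  have hposk : colPos v mu k = rot n b := by
    funext j
    unfold colPos
    rw [hmuk, hH]; ring
  have hposne : ∀ m, 1 ≤ m → m ≠ k → colPos v mu m = colPos v lam m := by
    intro m hm hmk
    funext j
    unfold colPos
    rw [hmune m hm hmk]
  have hmucyl : Cylindrical n v mu := by
    rw [cylindrical_iff hv hmump]
    intro m hm
    by_cases hmk : m = k
    · rw [hmk, hposk]; exact (hcyl k hk).rot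
    · rw [hposne m hm hmk]; exact hcyl m hm
  have heFun : ∀ c, eFun n v mu c = eFun n v lam c := by
    intro c
    by_cases hck : c + 1 = k
    · apply eFun_congr v (Equiv.addRight 1)
      intro j
      rw [hck, hposk, rot_cast]
      rfl
    · apply eFun_congr v (Equiv.refl _)
      intro j
      rw [hposne _ (by omega) hck]
      rfl
  have hmupi : IsPi n v mu p := ⟨fun c => by rw [heFun]; exact hpi.1 c, hpi.2⟩
  have hhigh := hmax mu hmump hmucyl hmupi
  apply not_rot_le hn (b := b)
  intro j
  have h1 := hhigh j k hk
  rw [hmuk] at h1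
  have h2 := hH j
  have : b j = (v j : ℤ) - colHt (lam j) k := rfl
  omega

/-! ### Comparing highest-lifts -/

/-- Row counts and the highest weight determine the steps of the path. -/
lemma eFun_eq_of_leftCount_eq {n l : ℕ} (v : Fin l → ℕ) {lam mu : Fin l → ℕ → ℕ}
    (hlam : IsMP l lam) (hmu : IsMP l mu)
    (h : ∀ k, 0 < k → ∀ r : ZMod n, leftCount n v mu k r = leftCount n v lam k r) (k : ℕ) :
    eFun n v mu k = eFun n v lam k := by
  obtain ⟨K₁, h₁⟩ := colHt_eq_zero_of_large hlam
  obtain ⟨K₂, h₂⟩ := colHt_eq_zero_of_large hmu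
  have hlarge : ∀ k ≥ max K₁ K₂, eFun n v mu k = eFun n v lam k := by
    intro k hk
    apply eFun_congr v (Equiv.refl _)
    intro j
    unfold colPos
    rw [Equiv.refl_apply, h₁ k (by omega), h₂ k (by omega)]
  have hdown : ∀ k, eFun n v mu (k + 1) = eFun n v lam (k + 1) →
      eFun n v mu k = eFun n v lam k := by
    intro k hk
    funext i
    have e1 := leftCount_sub v hlam k (i - (k : ZMod n))
    have e2 := leftCount_sub v hmu k (i - (k : ZMod n))
    rw [h _ (by omega), h _ (by omega), hk, sub_add_cancel] at e2
    rw [sub_add_cancel] at e1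
    omega
  rcases le_total (max K₁ K₂) k with hk | hk
  · exact hlarge k hk
  · exact Nat.decreasingInduction (motive := fun m _ => eFun n v mu m = eFun n v lam m)
      (fun m _ => hdown m) (hlarge _ le_rfl) hk

lemma IsHL.eq_of_leftCount_eq {n l : ℕ} {v : Fin l → ℕ} {lam mu : Fin l → ℕ → ℕ}
    {p q : ℕ → ZMod n → ℤ} (hlam : IsHL n v lam p) (hmu : IsHL n v mu q)
    (h : ∀ k, 0 < k → ∀ r : ZMod n, leftCount n v mu k r = leftCount n v lam k r) :
    mu = lam := by
  obtain ⟨hmp₁, hcyl₁, hpi₁, hmax₁⟩ := hlam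
  obtain ⟨hmp₂, hcyl₂, hpi₂, hmax₂⟩ := hmu
  have he := eFun_eq_of_leftCount_eq v hmp₁ hmp₂ h
  have hle₁ := hmax₁ mu hmp₂ hcyl₂ ⟨fun c => by rw [he]; exact hpi₁.1 c, hpi₁.2⟩
  have hle₂ := hmax₂ lam hmp₁ hcyl₁ ⟨fun c => by rw [← he]; exact hpi₂.1 c, hpi₂.2⟩
  funext j
  exact eq_of_colHt (hmp₂ j) (hmp₁ j) fun m hm => le_antisymm (hle₂ j m hm) (hle₁ j m hm)

/-- A function on `ZMod n` with constant differences is constant. -/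
lemma const_of_sub_const {n : ℕ} [NeZero n] {D : ZMod n → ℤ} {c : ℤ}
    (h : ∀ r, D r - D (r + 1) = c) (r s : ZMod n) : D r = D s := by
  have hc : c = 0 := by
    have h1 : ∑ r, (D r - D (r + 1)) = 0 := by
      rw [Finset.sum_sub_distrib, sub_eq_zero]
      exact (Equiv.sum_comp (Equiv.addRight (1 : ZMod n)) D).symm
    simp only [h, Finset.sum_const, Finset.card_univ, ZMod.card, nsmul_eq_mul] at h1
    rcases mul_eq_zero.1 h1 with h2 | h2
    · exact absurd h2 (by exact_mod_cast NeZero.ne n)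
    · exact h2
  have key : ∀ (m : ℕ), D (m : ZMod n) = D 0 := by
    intro m
    induction m with
    | zero => simp
    | succ m ih =>
      have := h (m : ZMod n)
      push_cast
      omega
  have key' : ∀ r, D r = D 0 := fun r => by
    rw [← ZMod.natCast_zmod_val r]; exact key _
  rw [key' r, key' s]

lemma eq_of_sub_const {n : ℕ} [NeZero n] {f g : ZMod n → ℕ} {c : ℤ}
    (h : ∀ r, ((f r : ℤ) - g r) - (f (r + 1) - g (r + 1)) = c) (hf : ∃ r, f r = 0)
    (hg : ∃ r, g r = 0) (r : ZMod n) : f r = g r := by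
  obtain ⟨x, hx⟩ := hf
  obtain ⟨y, hy⟩ := hg
  have h1 := const_of_sub_const (D := fun r => (f r : ℤ) - g r) h r x
  have h2 := const_of_sub_const (D := fun r => (f r : ℤ) - g r) h r y
  omega

/-- `♯λ = λ(♯p)` has, for each `k > 0` and colour `r`, as many length-`k`
rows with right end of colour `r` as `λ = λ(p)` has length-`k` rows with left end of
colour `-r`; and `♯λ` is the unique element of `𝒴(♯Λ″,♯Λ′)` with this property.
Here `Λ′ = ♯(wtOf n w)` and `Λ″ = wtOf n v''`. -/
theorem sharp_highest_lift (n : ℕ) [NeZero n] (hn : 2 ≤ n) (l' l'' : ℕ)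
    (w : Fin l' → ℕ) (hw : SortedV n l' w)
    (v'' : Fin l'' → ℕ) (hv'' : SortedV n l'' v'')
    (p : ℕ → ZMod n → ℤ)
    (hp : IsRes n l'' (sharpWt n (wtOf n w)) (wtOf n v'') p)
    (lam : Fin l'' → ℕ → ℕ)
    (hlam : IsHL n v'' lam (fun k i => p k i - sharpWt n (wtOf n w) i))
    (mu : Fin l' → ℕ → ℕ)
    (hmu : IsHL n w mu (fun k i => sharpPath n p k i - sharpWt n (wtOf n v'') i)) :
    (∀ k : ℕ, 0 < k → ∀ r : ZMod n,
        psiCount n w mu k r = leftCount n v'' lam k (-r)) ∧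
    ∀ mu' : Fin l' → ℕ → ℕ,
      (∃ q : ℕ → ZMod n → ℤ, IsRes n l' (sharpWt n (wtOf n v'')) (wtOf n w) q ∧
          IsHL n w mu' (fun k i => q k i - sharpWt n (wtOf n v'') i)) →
      (∀ k : ℕ, 0 < k → ∀ r : ZMod n,
          psiCount n w mu' k r = leftCount n v'' lam k (-r)) →
      mu' = mu := by
  have hn0 : 0 < n := by omega
  have main : ∀ k : ℕ, 0 < k → ∀ r : ZMod n,
      psiCount n w mu k r = leftCount n v'' lam k (-r) := by
    intro k hk
    obtain ⟨k, rfl⟩ : ∃ m, k = m + 1 := ⟨k - 1, by omega⟩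
    have hstepL : ∀ m i, p (m + 1) i - p m i =
        (eFun n v'' lam m (i - 1) : ℤ) - eFun n v'' lam m i := by
      intro m i
      have := congrFun (hlam.2.2.1.1 m) i
      simp only [stepWt] at this
      linarith
    have hstepM : ∀ m i, p (m + 1) (m + 1 - i) - p m (m - i) =
        (eFun n w mu m (i - 1) : ℤ) - eFun n w mu m i := by
      intro m i
      have := congrFun (hmu.2.2.1.1 m) i
      simp only [stepWt, sharpPath] at this
      push_cast at this
      linarith
    -- each step of `♯p` is that of the dominant complement `p_m - η̂_m`, up to a constant
    have hcompl : ∀ m, ∃ c : ℤ, ∀ i,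
        (eFun n w mu m i : ℤ) = p m (m - i) - eFun n v'' lam m (m - i) + c := by
      intro m
      let D : ZMod n → ℤ := fun i =>
        (eFun n w mu m i : ℤ) - (p m (m - i) - eFun n v'' lam m (m - i))
      have hD : ∀ i, D i - D (i + 1) = 0 := by
        intro i
        have h1 := hstepL m (m - i)
        have h2 := hstepM m (i + 1)
        have e1 : (m : ZMod n) + 1 - (i + 1) = m - i := by ring
        have e2 : (m : ZMod n) - (i + 1) = m - i - 1 := by ring
        rw [e1, e2, add_sub_cancel_right] at h2
        simp only [D, e2]
        linarith
      refine ⟨D 0, fun i => ?_⟩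
      have := const_of_sub_const hD i 0
      simp only [D] at this ⊢
      linarith
    obtain ⟨c₀, hc₀⟩ := hcompl k
    obtain ⟨c₁, hc₁⟩ := hcompl (k + 1)
    apply eq_of_sub_const (c := c₁ - c₀)
    · intro r
      have h1 := leftCount_sub w hmu.1 k (r - (k : ZMod n))
      have h2 := leftCount_sub v'' hlam.1 k (-(r + 1))
      have h3 := hc₁ (r + 1)
      have h4 := hc₀ r
      have h5 := hstepL k (k - r)
      rw [psiCount_eq, psiCount_eq]
      have e1 : r - ((k + 1 : ℕ) : ZMod n) + 1 = r - k := by push_cast; ring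
      have e2 : r + 1 - ((k + 1 : ℕ) : ZMod n) + 1 = r - k + 1 := by push_cast; ring
      have e3 : -(r + 1) + 1 = -r := by ring
      have e4 : -(r + 1) + (k : ZMod n) + 1 = k - r := by ring
      have e5 : -(r + 1) + (k : ZMod n) = k - r - 1 := by ring
      have e6 : ((k + 1 : ℕ) : ZMod n) - (r + 1) = k - r := by push_cast; ring
      rw [e1, e2]
      rw [sub_add_cancel] at h1
      rw [e3, e4, e5] at h2
      rw [e6] at h3
      linarith
    · obtain ⟨r, hr⟩ := hmu.exists_leftCount_eq_zero hn0 hw hk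
      refine ⟨r + k, ?_⟩
      rw [psiCount_eq, ← hr]
      congr 1
      push_cast
      ring
    · obtain ⟨r, hr⟩ := hlam.exists_leftCount_eq_zero hn0 hv'' hk
      exact ⟨-r, by rw [neg_neg]; exact hr⟩
  refine ⟨main, ?_⟩
  rintro mu' ⟨q, -, hmu'⟩ h
  apply hmu.eq_of_leftCount_eq hmu'
  intro k hk r
  have h1 := (h k hk (r + k - 1)).trans (main k hk (r + k - 1)).symm
  rw [psiCount_eq, psiCount_eq] at h1
  have e : r + (k : ZMod n) - 1 - k + 1 = r := by ring
  rwa [e] at h1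

end BF
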